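/- For every positive integer n there exists a K_{2,2}-free 𝒪_2-free graph G with at least n vertices whose tree-independence number satisfies tree-α(G) ≥ (log_2 |V(G)| − 1)/2. -/

import Mathlib

open SimpleGraph

/-- `G` contains `k` pairwise independent cycles: `k` cycles that are pairwise
vertex-disjoint with no edge between any two of them. -/
def HasIndepCycles {V : Type*} (G : SimpleGraph V) (k : ℕ) : Prop :=
  ∃ (a : Fin k → V) (w : ∀ i : Fin k, G.Walk (a i) (a i)),
    (∀ i, (w i).IsCycle) ∧
    ∀ i j : Fin k, i ≠ j →
      ∀ u ∈ (w i).support, ∀ v ∈ (w j).support, u ≠ v ∧ ¬ G.Adj u v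

/-- `G` is `𝒪_k`-free: it does not contain `k` pairwise independent cycles. -/
def OkFree {V : Type*} (G : SimpleGraph V) (k : ℕ) : Prop :=
  ¬ HasIndepCycles G k

/-- The independence number of the subgraph of `G` induced by `s`:
the supremum of sizes of independent sets contained in `s`. -/
noncomputable def setIndepNum {V : Type*} (G : SimpleGraph V) (s : Set V) : ℕ :=
  sSup {n | ∃ t : Finset V, ↑t ⊆ s ∧ (∀ u ∈ t, ∀ v ∈ t, u ≠ v → ¬ G.Adj u v) ∧ t.card = n}

/-- A tree decomposition of a graph `G`. -/
structure TreeDecomp {V : Type*} (G : SimpleGraph V) where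
  ι : Type
  T : SimpleGraph ι
  tree : T.IsTree
  bag : ι → Set V
  bag_vert : ∀ v : V, ∃ i, v ∈ bag i
  bag_edge : ∀ u v : V, G.Adj u v → ∃ i, u ∈ bag i ∧ v ∈ bag i
  bag_conn : ∀ v : V, (T.induce {i | v ∈ bag i}).Connected

/-- The tree-independence number of `G`: the least `n` such that `G` has a tree
decomposition all of whose bags induce subgraphs with independence number at most `n`. -/
noncomputable def treeIndepNum {V : Type*} (G : SimpleGraph V) : ℕ :=
  sInf {n | ∃ D : TreeDecomp G, ∀ i, setIndepNum G (D.bag i) ≤ n}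

/-- `G` is `H`-free: no induced subgraph of `G` is isomorphic to `H`. -/
def IndFree {W V : Type*} (H : SimpleGraph W) (G : SimpleGraph V) : Prop :=
  IsEmpty (H ↪g G)

/-! A graph with a `K_k`-minor has a bramble of `k` disjoint branch sets, and by the Helly property
for subtrees some bag of any tree decomposition hits all of them. If the vertices are two-coloured
so that vertices of equal colour in distinct branch sets are never adjacent, then half of the hit
vertices are independent, whence `k ≤ 2 * tree-α`.

The graph is a ruler: a path on the naturals, with a hub for each `i` joined to the marks of height
`i`, which are the odd multiples of `2 ^ (i + 1)`. Hub `i` and the stretch of path between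
`2 ^ (i + 1)` and `2 ^ (i + 2)` form the `i`-th branch set, with hubs and path vertices as colours.
Two marks of height `m` are separated by at most one higher mark, so removing hubs `0, …, m`
and all marks of height `m` leaves a forest. Hence a cycle whose hubs all lie above `m` contains a
mark of height `m`; applied to the lowest hub `m` of two cycles, this shows that the cycle avoiding
`m` is joined to `m` by an edge. -/

section Helly

variable {ι κ : Type*} {T : SimpleGraph ι} {A B C : Set ι}

theorem induce_preconnected_iff_exists_walk :
    (T.induce A).Preconnected ↔
      ∀ x ∈ A, ∀ y ∈ A, ∃ p : T.Walk x y, ∀ z ∈ p.support, z ∈ A := by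
  refine ⟨fun h x hx y hy => ?_, fun h x y => ?_⟩
  · obtain ⟨p⟩ := h ⟨x, hx⟩ ⟨y, hy⟩
    refine ⟨p.map (Embedding.induce A).toHom, fun z hz => ?_⟩
    obtain ⟨t, -, rfl⟩ := List.mem_map.1 (p.support_map _ ▸ hz)
    exact t.2
  · obtain ⟨p, hp⟩ := h x x.2 y y.2
    exact ⟨p.induce A hp⟩

theorem mem_of_isPath_of_induce_preconnected (hT : T.IsAcyclic) (hA : (T.induce A).Preconnected)
    {x y z : ι} (hx : x ∈ A) (hy : y ∈ A) {p : T.Walk x y} (hp : p.IsPath) (hz : z ∈ p.support) :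
    z ∈ A := by
  classical
  obtain ⟨q, hq⟩ := induce_preconnected_iff_exists_walk.1 hA x hx y hy
  have hpq : p = q.bypass := congrArg Subtype.val ((hT.subsingleton_path x y).elim ⟨p, hp⟩ q.toPath)
  exact hq z (q.support_bypass_subset_support (hpq ▸ hz))

theorem induce_inter_preconnected (hT : T.IsAcyclic) (hA : (T.induce A).Preconnected)
    (hB : (T.induce B).Preconnected) : (T.induce (A ∩ B)).Preconnected := by
  classical
  rw [induce_preconnected_iff_exists_walk]
  rintro x ⟨hxA, hxB⟩ y ⟨hyA, hyB⟩
  obtain ⟨p, -⟩ := induce_preconnected_iff_exists_walk.1 hA x hxA y hyA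
  exact ⟨p.bypass, fun z hz =>
    ⟨mem_of_isPath_of_induce_preconnected hT hA hxA hyA p.bypass_isPath hz,
      mem_of_isPath_of_induce_preconnected hT hB hxB hyB p.bypass_isPath hz⟩⟩

theorem inter_inter_nonempty_of_isAcyclic (hT : T.IsAcyclic) (hA : (T.induce A).Preconnected)
    (hB : (T.induce B).Preconnected) (hC : (T.induce C).Preconnected) (hAB : (A ∩ B).Nonempty)
    (hBC : (B ∩ C).Nonempty) (hAC : (A ∩ C).Nonempty) : (A ∩ B ∩ C).Nonempty := by
  classical
  obtain ⟨x, hxA, hxB⟩ := hAB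
  obtain ⟨y, hyB, hyC⟩ := hBC
  obtain ⟨z, hzA, hzC⟩ := hAC
  by_cases hzB : z ∈ B
  · exact ⟨z, ⟨hzA, hzB⟩, hzC⟩
  obtain ⟨p, hp⟩ := induce_preconnected_iff_exists_walk.1 hB x hxB y hyB
  obtain ⟨q, hq⟩ := induce_preconnected_iff_exists_walk.1 hC y hyC z hzC
  -- The path from `x` to `z` lies in `A` and shortcuts `p` and `q`; where it leaves `B`, it is in
  -- `C`.
  obtain ⟨d, hd, hdB, hdB'⟩ := (p.append q).bypass.exists_boundary_dart B hxB hzB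
  have hdA : d.fst ∈ A := mem_of_isPath_of_induce_preconnected hT hA hxA hzA
    (p.append q).bypass_isPath (Walk.dart_fst_mem_support_of_mem_darts _ hd)
  have hdC : d.fst ∈ C := by
    have hd' := (p.append q).darts_bypass_subset_darts hd
    rw [Walk.darts_append, List.mem_append] at hd'
    rcases hd' with hd' | hd'
    · exact (hdB' (hp _ (p.dart_snd_mem_support_of_mem_darts hd'))).elim
    · exact hq _ (q.dart_fst_mem_support_of_mem_darts hd')
  exact ⟨d.fst, ⟨hdA, hdB⟩, hdC⟩

theorem exists_forall_mem_of_isAcyclic (hT : T.IsAcyclic) {s : Finset κ} (hs : s.Nonempty)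
    {f : κ → Set ι} (hconn : ∀ i ∈ s, (T.induce (f i)).Preconnected)
    (hinter : ∀ i ∈ s, ∀ j ∈ s, (f i ∩ f j).Nonempty) : ∃ x, ∀ i ∈ s, x ∈ f i := by
  induction hs using Finset.Nonempty.cons_induction generalizing f with
  | singleton a => simpa [Set.Nonempty] using hinter a
  | cons a s _ hs ih =>
    simp only [Finset.mem_cons, forall_eq_or_imp] at hconn hinter ⊢
    obtain ⟨x, hx⟩ := ih (f := fun i => f a ∩ f i)
      (fun i hi => induce_inter_preconnected hT hconn.1 (hconn.2 i hi))
      (fun i hi j hj => by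
        rw [← Set.inter_inter_distrib_left, ← Set.inter_assoc]
        exact inter_inter_nonempty_of_isAcyclic hT hconn.1 (hconn.2 i hi) (hconn.2 j hj)
          (hinter.1.2 i hi) ((hinter.2 i hi).2 j hj) (hinter.1.2 j hj))
    obtain ⟨i, hi⟩ := hs
    exact ⟨x, (hx i hi).1, fun j hj => (hx j hj).2⟩

end Helly

section Bramble

variable {V W κ κ' : Type*} {G : SimpleGraph V} {H : SimpleGraph W}

/-- Two vertex sets touch if they intersect or are joined by an edge. -/
def Touches (G : SimpleGraph V) (A B : Set V) : Prop :=
  ∃ u ∈ A, ∃ v ∈ B, u = v ∨ G.Adj u v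

theorem Touches.symm {A B : Set V} : Touches G A B → Touches G B A :=
  fun ⟨u, hu, v, hv, h⟩ => ⟨v, hv, u, hu, h.imp Eq.symm Adj.symm⟩

/-- A bramble: a family of connected vertex sets which pairwise touch. That each member touches
itself says that it is nonempty. -/
structure IsBramble (G : SimpleGraph V) (B : κ → Set V) : Prop where
  preconnected : ∀ i, (G.induce (B i)).Preconnected
  touches : ∀ i j, Touches G (B i) (B j)

theorem IsBramble.comp {B : κ → Set V} (hB : IsBramble G B) (f : κ' → κ) :
    IsBramble G (B ∘ f) :=
  ⟨fun i => hB.preconnected (f i), fun i j => hB.touches (f i) (f j)⟩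

theorem IsBramble.preimage {B : κ → Set W} (hB : IsBramble H B) (φ : G ↪g H)
    (hφ : ∀ i, B i ⊆ Set.range φ) : IsBramble G fun i => φ ⁻¹' B i where
  preconnected i := by
    choose g hg using fun b : B i => hφ i b.2
    let f : H.induce (B i) →g G.induce (φ ⁻¹' B i) :=
      { toFun := fun b => ⟨g b, by simp [hg]⟩
        map_rel' := fun {a b} hab => by simpa [← φ.map_adj_iff, hg] using hab }
    exact (hB.preconnected i).map f fun v => ⟨⟨φ v, v.2⟩, Subtype.ext (φ.injective (hg _))⟩
  touches i j := by
    obtain ⟨u, hu, v, hv, huv⟩ := hB.touches i j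
    obtain ⟨u, rfl⟩ := hφ i hu
    obtain ⟨v, rfl⟩ := hφ j hv
    exact ⟨u, hu, v, hv, huv.imp (fun h => φ.injective h) φ.map_adj_iff.1⟩

theorem TreeDecomp.induce_preconnected (D : TreeDecomp G) {A : Set V}
    (hA : (G.induce A).Preconnected) :
    (D.T.induce {t | (A ∩ D.bag t).Nonempty}).Preconnected := by
  have reachable_of_mem {v : V} (hv : v ∈ A) {s t : D.ι} (hs : v ∈ D.bag s) (ht : v ∈ D.bag t) :
      (D.T.induce {t | (A ∩ D.bag t).Nonempty}).Reachable ⟨s, v, hv, hs⟩ ⟨t, v, hv, ht⟩ := by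
    have hsub : {t | v ∈ D.bag t} ⊆ {t | (A ∩ D.bag t).Nonempty} := fun _ h => ⟨v, hv, h⟩
    exact ((D.bag_conn v).preconnected ⟨s, hs⟩ ⟨t, ht⟩).map (induceHomOfLE D.T hsub).toHom
  rintro ⟨s, u, hu, hs⟩ ⟨t, v, hv, ht⟩
  obtain ⟨w⟩ := hA ⟨u, hu⟩ ⟨v, hv⟩
  generalize hu' : (⟨u, hu⟩ : A) = a at w
  generalize hv' : (⟨v, hv⟩ : A) = b at w
  induction w generalizing u s with
  | nil =>
    obtain rfl : u = v := congrArg Subtype.val (hu'.trans hv'.symm)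
    exact reachable_of_mem hu hs ht
  | @cons _ c _ h _ ih =>
    subst hu'
    obtain ⟨r, hur, hcr⟩ := D.bag_edge _ _ (induce_adj.1 h)
    exact (reachable_of_mem hu hs hur).trans (ih r c c.2 hcr rfl hv')

theorem TreeDecomp.exists_bag_inter_nonempty [Finite κ] (D : TreeDecomp G) {B : κ → Set V}
    (hB : IsBramble G B) : ∃ t, ∀ i, (B i ∩ D.bag t).Nonempty := by
  cases nonempty_fintype κ
  cases isEmpty_or_nonempty κ
  · exact ⟨D.tree.connected.nonempty.some, isEmptyElim⟩
  obtain ⟨t, ht⟩ := exists_forall_mem_of_isAcyclic D.tree.isAcyclic Finset.univ_nonempty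
    (f := fun i => {t | (B i ∩ D.bag t).Nonempty})
    (fun i _ => D.induce_preconnected (hB.preconnected i)) (fun i _ j _ => by
      obtain ⟨u, hu, v, hv, rfl | huv⟩ := hB.touches i j
      · obtain ⟨t, ht⟩ := D.bag_vert u
        exact ⟨t, ⟨u, hu, ht⟩, u, hv, ht⟩
      · obtain ⟨t, hut, hvt⟩ := D.bag_edge u v huv
        exact ⟨t, ⟨u, hu, hut⟩, v, hv, hvt⟩)
  exact ⟨t, fun i => ht i (Finset.mem_univ i)⟩

end Bramble

section TreeIndepNum

variable {V κ α : Type*} {G : SimpleGraph V}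

/-- The tree decomposition with a single bag. -/
def TreeDecomp.single (G : SimpleGraph V) : TreeDecomp G where
  ι := Unit
  T := ⊥
  tree := .of_subsingleton
  bag _ := Set.univ
  bag_vert _ := ⟨(), trivial⟩
  bag_edge _ _ _ := ⟨(), trivial, trivial⟩
  bag_conn _ := { preconnected := .of_subsingleton, nonempty := ⟨⟨(), trivial⟩⟩ }

theorem exists_treeDecomp_forall_setIndepNum_le (G : SimpleGraph V) :
    ∃ D : TreeDecomp G, ∀ t, setIndepNum G (D.bag t) ≤ treeIndepNum G :=
  Nat.sInf_mem (s := {n | ∃ D : TreeDecomp G, ∀ t, setIndepNum G (D.bag t) ≤ n})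
    ⟨setIndepNum G Set.univ, TreeDecomp.single G, fun _ => le_rfl⟩

theorem card_le_setIndepNum [Finite V] {s : Set V} {t : Finset V} (hts : ↑t ⊆ s)
    (ht : ∀ u ∈ t, ∀ v ∈ t, u ≠ v → ¬ G.Adj u v) : t.card ≤ setIndepNum G s := by
  cases nonempty_fintype V
  refine le_csSup ⟨Fintype.card V, ?_⟩ ⟨t, hts, ht, rfl⟩
  rintro _ ⟨t', -, -, rfl⟩
  exact t'.card_le_univ

theorem IsBramble.card_le_treeIndepNum_mul_card [Finite V] [Fintype κ] [Fintype α]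
    {B : κ → Set V} (hB : IsBramble G B) (c : V → α)
    (hc : ∀ i j, i ≠ j → ∀ u ∈ B i, ∀ v ∈ B j, c u = c v → u ≠ v ∧ ¬ G.Adj u v) :
    Fintype.card κ ≤ treeIndepNum G * Fintype.card α := by
  classical
  obtain ⟨D, hD⟩ := exists_treeDecomp_forall_setIndepNum_le G
  obtain ⟨t, ht⟩ := D.exists_bag_inter_nonempty hB
  choose x hxB hxt using ht
  refine Finset.card_le_mul_card_image_of_maps_to (f := c ∘ x) (fun _ _ => Finset.mem_univ _) _
    fun a _ => ?_
  set s : Finset κ := {i | (c ∘ x) i = a} with hs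
  have hindep : ∀ i ∈ s, ∀ j ∈ s, i ≠ j → x i ≠ x j ∧ ¬ G.Adj (x i) (x j) := by
    intro i hi j hj hij
    simp only [hs, Finset.mem_filter_univ, Function.comp_apply] at hi hj
    exact hc i j hij _ (hxB i) _ (hxB j) (hi.trans hj.symm)
  have hinj : Set.InjOn x s := fun i hi j hj h =>
    by_contra fun hij => (hindep i hi j hj hij).1 h
  rw [← Finset.card_image_of_injOn hinj]
  refine (card_le_setIndepNum ?_ ?_).trans (hD t)
  · simp only [Finset.coe_image, Set.image_subset_iff]
    exact fun i _ => hxt i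
  · simp only [Finset.forall_mem_image]
    exact fun i hi j hj hij => (hindep i hi j hj (ne_of_apply_ne x hij)).2

end TreeIndepNum

section InducedSubgraph

variable {V W U : Type*} {G : SimpleGraph V} {H : SimpleGraph W} {F : SimpleGraph U}

theorem IndFree.of_embedding (h : IndFree F H) (φ : G ↪g H) : IndFree F G :=
  ⟨fun f => h.false (φ.comp f)⟩

theorem HasIndepCycles.map {k : ℕ} (h : HasIndepCycles G k) (φ : G ↪g H) :
    HasIndepCycles H k := by
  obtain ⟨a, w, hw, hind⟩ := h
  refine ⟨φ ∘ a, fun i => (w i).map φ.toHom, fun i => (hw i).map φ.injective, ?_⟩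
  simp only [Walk.support_map, List.forall_mem_map]
  exact fun i j hij u hu v hv =>
    (hind i j hij u hu v hv).imp φ.injective.ne (mt φ.map_adj_iff.1)

theorem OkFree.of_embedding {k : ℕ} (h : OkFree H k) (φ : G ↪g H) : OkFree G k :=
  fun hG => h (hG.map φ)

end InducedSubgraph

section RulerMark

variable {i j m p q : ℕ}

/-- A ruler has a mark of height `i` at `p` if `p` is an odd multiple of `2 ^ (i + 1)`. Odd numbers
carry no mark. -/
def RulerMark (i p : ℕ) : Prop := p ≡ 2 ^ (i + 1) [MOD 2 ^ (i + 2)]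

theorem rulerMark_add_two_pow (h : 2 ^ (i + 2) ∣ p) : RulerMark i (p + 2 ^ (i + 1)) := by
  simpa only [RulerMark, zero_add] using (Nat.modEq_zero_iff_dvd.2 h).add_right (2 ^ (i + 1))

theorem rulerMark_two_pow (i : ℕ) : RulerMark i (2 ^ (i + 1)) := Nat.ModEq.refl _

namespace RulerMark

theorem dvd_of_lt (h : RulerMark i p) (hm : m < i) : 2 ^ (m + 2) ∣ p :=
  (h.dvd_iff (pow_dvd_pow 2 (by omega))).2 (pow_dvd_pow 2 (by omega))

theorem not_dvd (h : RulerMark i p) : ¬ 2 ^ (i + 2) ∣ p := by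
  rw [h.dvd_iff dvd_rfl, Nat.pow_dvd_pow_iff_le_right']
  omega

theorem height_unique (hi : RulerMark i p) (hj : RulerMark j p) : i = j := by
  rcases lt_trichotomy i j with hij | hij | hij
  · exact (hi.not_dvd (hj.dvd_of_lt hij)).elim
  · exact hij
  · exact (hj.not_dvd (hi.dvd_of_lt hij)).elim

theorem add_two_ne (hp : RulerMark i p) (hq : RulerMark i q) : p + 2 ≠ q := by
  rintro rfl
  have hdvd : 2 ^ (i + 2) ∣ p + 2 - p := (Nat.modEq_iff_dvd' (by omega)).1 (hp.trans hq.symm)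
  rw [Nat.add_sub_cancel_left] at hdvd
  have hle : 2 ^ (i + 2) ≤ 2 := Nat.le_of_dvd two_pos hdvd
  rw [pow_add] at hle
  have := Nat.two_pow_pos i
  omega

end RulerMark

end RulerMark

section RulerGraph

/-- The infinite ruler: a path on the naturals (`Sum.inr`) together with hubs (`Sum.inl`), where
hub `i` is joined to all marks of height `i`. -/
def rulerGraph : SimpleGraph (ℕ ⊕ ℕ) where
  Adj
    | .inl _, .inl _ => False
    | .inl i, .inr p => RulerMark i p
    | .inr p, .inl i => RulerMark i p
    | .inr p, .inr q => p + 1 = q ∨ q + 1 = p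
  symm := ⟨by rintro (i | p) (j | q) h <;> first | exact h | exact h.symm⟩
  loopless := ⟨by rintro (i | p) h; exacts [h, by omega]⟩

variable {i j p q : ℕ}

theorem rulerGraph_not_adj_inl_inl : ¬ rulerGraph.Adj (.inl i) (.inl j) := id

theorem rulerGraph_adj_inl_inr : rulerGraph.Adj (.inl i) (.inr p) ↔ RulerMark i p := Iff.rfl

theorem rulerGraph_adj_inr_inl : rulerGraph.Adj (.inr p) (.inl i) ↔ RulerMark i p := Iff.rfl

theorem rulerGraph_adj_inr_inr :
    rulerGraph.Adj (.inr p) (.inr q) ↔ p + 1 = q ∨ q + 1 = p := Iff.rfl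

theorem rulerGraph_eq_of_common_neighbors {a a' b b' : ℕ ⊕ ℕ} (ha : a ≠ a')
    (hab : rulerGraph.Adj a b) (hab' : rulerGraph.Adj a b') (ha'b : rulerGraph.Adj a' b)
    (ha'b' : rulerGraph.Adj a' b') : b = b' := by
  have eq_of_marks {i p q r : ℕ} (hp : RulerMark i p) (hq : RulerMark i q)
      (hrp : r + 1 = p ∨ p + 1 = r) (hrq : r + 1 = q ∨ q + 1 = r) : p = q := by
    have := hp.add_two_ne hq
    have := hq.add_two_ne hp
    omega
  rcases a with i | p <;> rcases a' with i' | p' <;> rcases b with j | q <;>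
    rcases b' with j' | q' <;>
    simp only [rulerGraph_not_adj_inl_inl, rulerGraph_adj_inl_inr, rulerGraph_adj_inr_inl,
      rulerGraph_adj_inr_inr, ne_eq, Sum.inl.injEq, Sum.inr.injEq] at *
  · exact (ha (hab.height_unique ha'b)).elim
  · exact eq_of_marks hab hab' ha'b ha'b'
  · exact eq_of_marks ha'b ha'b' hab hab'
  · exact hab.height_unique hab'
  · exact (ha (eq_of_marks hab ha'b hab'.symm ha'b'.symm)).elim
  · exact (ha (eq_of_marks hab' ha'b' hab.symm ha'b.symm)).elim
  · omega

theorem rulerGraph_indFree : IndFree (completeBipartiteGraph (Fin 2) (Fin 2)) rulerGraph := by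
  refine ⟨fun f => ?_⟩
  have hadj (i j : Fin 2) : rulerGraph.Adj (f (.inl i)) (f (.inr j)) :=
    f.map_adj_iff.2 (by simp)
  have heq : f (.inr 0) = f (.inr 1) := rulerGraph_eq_of_common_neighbors
    (f.injective.ne (Sum.inl_injective.ne Fin.zero_ne_one))
    (hadj 0 0) (hadj 0 1) (hadj 1 0) (hadj 1 1)
  simpa using f.injective heq

end RulerGraph

section Cycles

theorem exists_mem_support_ne_adj_of_isCycle {V : Type*} {G : SimpleGraph V} {u v : V}
    {w : G.Walk u u} (hw : w.IsCycle) (hv : v ∈ w.support) (x : V) :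
    ∃ y ∈ w.support, y ≠ x ∧ G.Adj v y := by
  have htwo := hw.ncard_neighborSet_toSubgraph_eq_two hv
  obtain ⟨y, hy, hyx⟩ := Set.exists_ne_of_one_lt_ncard (htwo ▸ one_lt_two) x
  rw [Subgraph.mem_neighborSet] at hy
  exact ⟨y, w.mem_verts_toSubgraph.1 hy.snd_mem, hyx, hy.adj_sub⟩

variable {v : ℕ ⊕ ℕ} {w : rulerGraph.Walk v v} {p m : ℕ}

theorem exists_rulerMark_inl_mem_of_isCycle (hw : w.IsCycle) (hp : .inr p ∈ w.support) {q : ℕ}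
    (hq : ∀ y, rulerGraph.Adj (.inr p) (.inr y) → .inr y ∈ w.support → y = q) :
    ∃ i, .inl i ∈ w.support ∧ RulerMark i p := by
  obtain ⟨i | y, hy, hne, hadj⟩ := exists_mem_support_ne_adj_of_isCycle hw hp (.inr q)
  · exact ⟨i, hy, hadj⟩
  · exact (hne (congrArg Sum.inr (hq y hadj hy))).elim

theorem exists_greatest_inr_mem_of_isCycle (hw : w.IsCycle) :
    ∃ p, .inr p ∈ w.support ∧ ∀ x, .inr x ∈ w.support → x ≤ p := by
  have hfin : {x | .inr x ∈ w.support}.Finite :=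
    w.support.finite_toSet.preimage Sum.inr_injective.injOn
  refine Set.exists_max_image _ id hfin ?_
  rcases v with i | p
  · obtain ⟨j | p, hp, -, hadj⟩ :=
      exists_mem_support_ne_adj_of_isCycle hw w.start_mem_support (.inl i)
    · exact (rulerGraph_not_adj_inl_inl hadj).elim
    · exact ⟨p, hp⟩
  · exact ⟨p, w.start_mem_support⟩

theorem exists_rulerMark_inl_mem_of_isCycle_of_forall_le (hw : w.IsCycle)
    (hp : .inr p ∈ w.support) (hmax : ∀ x, .inr x ∈ w.support → x ≤ p) :
    ∃ i, .inl i ∈ w.support ∧ RulerMark i p := by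
  refine exists_rulerMark_inl_mem_of_isCycle hw hp (q := p - 1) fun y hadj hy => ?_
  have := hmax y hy
  rw [rulerGraph_adj_inr_inr] at hadj
  omega

theorem exists_inl_mem_of_isCycle (hw : w.IsCycle) : ∃ i, .inl i ∈ w.support := by
  obtain ⟨p, hp, hmax⟩ := exists_greatest_inr_mem_of_isCycle hw
  exact (exists_rulerMark_inl_mem_of_isCycle_of_forall_le hw hp hmax).imp fun _ h => h.1

theorem exists_succ_eq_inr_mem_of_isCycle (hw : w.IsCycle) (hp : .inr p ∈ w.support)
    (hmax : ∀ x, .inr x ∈ w.support → x ≤ p) : ∃ x, x + 1 = p ∧ .inr x ∈ w.support := by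
  obtain ⟨i, -, hip⟩ := exists_rulerMark_inl_mem_of_isCycle_of_forall_le hw hp hmax
  obtain ⟨j | y, hy, hne, hadj⟩ := exists_mem_support_ne_adj_of_isCycle hw hp (.inl i)
  · exact (hne (congrArg Sum.inl (RulerMark.height_unique hadj hip))).elim
  · have := hmax y hy
    rw [rulerGraph_adj_inr_inr] at hadj
    exact ⟨y, by omega, hy⟩

theorem exists_rulerMark_inr_mem_of_isCycle (hw : w.IsCycle)
    (hm : ∀ i, .inl i ∈ w.support → m < i) : ∃ x, .inr x ∈ w.support ∧ RulerMark m x := by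
  obtain ⟨p, hp, hmax⟩ := exists_greatest_inr_mem_of_isCycle hw
  obtain ⟨p', rfl, hp'⟩ := exists_succ_eq_inr_mem_of_isCycle hw hp hmax
  have hpdvd : 2 ^ (m + 2) ∣ p' + 1 := by
    obtain ⟨i, hi, hip⟩ := exists_rulerMark_inl_mem_of_isCycle_of_forall_le hw hp hmax
    exact hip.dvd_of_lt (hm i hi)
  -- `q` is the left end of the stretch of the cycle along the path that ends in `p' + 1`.
  let run : Set ℕ := {q | ∀ x, q ≤ x → x ≤ p' + 1 → .inr x ∈ w.support}
  have hrun : p' ∈ run := fun x hx hx' => by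
    rcases (by omega : x = p' ∨ x = p' + 1) with rfl | rfl <;> assumption
  obtain ⟨q, hq, hqmin⟩ : ∃ q, IsLeast run q := ⟨_, Nat.sInf_mem ⟨p', hrun⟩, fun _ => Nat.sInf_le⟩
  have hqp : q ≤ p' := hqmin hrun
  have hqdvd : 2 ^ (m + 2) ∣ q := by
    obtain ⟨i, hi, hiq⟩ := exists_rulerMark_inl_mem_of_isCycle hw (hq q le_rfl (by omega))
      (q := q + 1) fun y hadj hy => by
        rcases hadj with h | rfl
        · exact h.symm
        · have : y ∈ run := fun x hx hx' => hx.eq_or_lt.elim (fun h => h ▸ hy) (hq x · hx')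
          exact absurd (hqmin this) (by omega)
    exact hiq.dvd_of_lt (hm i hi)
  have hlen : 2 ^ (m + 2) ≤ p' + 1 - q := Nat.le_of_dvd (by omega) (Nat.dvd_sub hpdvd hqdvd)
  rw [pow_succ] at hlen
  exact ⟨q + 2 ^ (m + 1), hq _ (by omega) (by omega), rulerMark_add_two_pow hqdvd⟩

theorem rulerGraph_okFree_two : OkFree rulerGraph 2 := by
  rintro ⟨a, w, hw, hind⟩
  obtain ⟨i, hi⟩ := exists_inl_mem_of_isCycle (hw 0)
  obtain ⟨m, ⟨c, hmc⟩, hmin⟩ :=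
    wellFounded_lt.has_min {m : ℕ | ∃ c, .inl m ∈ (w c).support} ⟨i, 0, hi⟩
  obtain ⟨d, hdc⟩ := exists_ne c
  have hlt : ∀ j, .inl j ∈ (w d).support → m < j := fun j hj =>
    (not_lt.1 (hmin j ⟨d, hj⟩)).lt_of_ne fun h =>
      (hind c d hdc.symm _ hmc _ hj).1 (congrArg Sum.inl h)
  obtain ⟨x, hx, hmx⟩ := exists_rulerMark_inr_mem_of_isCycle (hw d) hlt
  exact (hind c d hdc.symm _ hmc _ hx).2 hmx

end Cycles

section RulerBranch

variable {i j p : ℕ}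

/-- The `i`-th branch set of a clique minor of the ruler: hub `i` with the path from
`2 ^ (i + 1)` to `2 ^ (i + 2) - 2`. Leaving out `2 ^ (i + 2) - 1` separates it from the next one. -/
def rulerBranch (i : ℕ) : Set (ℕ ⊕ ℕ) :=
  insert (.inl i) (.inr '' Set.Ico (2 ^ (i + 1)) (2 ^ (i + 2) - 1))

theorem inl_mem_rulerBranch : .inl j ∈ rulerBranch i ↔ j = i := by
  simp [rulerBranch]

theorem inr_mem_rulerBranch :
    .inr p ∈ rulerBranch i ↔ 2 ^ (i + 1) ≤ p ∧ p < 2 ^ (i + 2) - 1 := by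
  simp [rulerBranch]

theorem rulerBranch_preconnected (i : ℕ) : (rulerGraph.induce (rulerBranch i)).Preconnected := by
  have hub_mem : .inl i ∈ rulerBranch i := inl_mem_rulerBranch.2 rfl
  have hreach (p : ℕ) (hp : .inr p ∈ rulerBranch i) :
      (rulerGraph.induce (rulerBranch i)).Reachable ⟨.inl i, hub_mem⟩ ⟨.inr p, hp⟩ := by
    obtain ⟨hle, hlt⟩ := inr_mem_rulerBranch.1 hp
    induction p, hle using Nat.le_induction with
    | base => exact Adj.reachable (rulerMark_two_pow i)
    | succ p hle ih =>
      have hp' : .inr p ∈ rulerBranch i := inr_mem_rulerBranch.2 ⟨hle, by omega⟩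
      refine (ih hp' (by omega)).trans (Adj.reachable ?_)
      exact rulerGraph_adj_inr_inr.2 (.inl rfl)
  refine ((connected_iff_exists_forall_reachable _).2 ⟨⟨.inl i, hub_mem⟩, ?_⟩).preconnected
  rintro ⟨j | p, hv⟩
  · obtain rfl := inl_mem_rulerBranch.1 hv
    rfl
  · exact hreach p hv

theorem rulerBranch_touches_of_lt (hij : i < j) :
    Touches rulerGraph (rulerBranch i) (rulerBranch j) := by
  refine ⟨.inl i, inl_mem_rulerBranch.2 rfl, .inr (2 ^ (j + 1) + 2 ^ (i + 1)),
    inr_mem_rulerBranch.2 ⟨Nat.le_add_right _ _, ?_⟩,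
    .inr (rulerMark_add_two_pow (pow_dvd_pow 2 (by omega)))⟩
  have hpow : 2 ^ (i + 1) ≤ 2 ^ j := Nat.pow_le_pow_right (by norm_num) hij
  have hpos := Nat.two_pow_pos i
  rw [pow_succ] at hpow
  rw [pow_succ, pow_succ, pow_add]
  omega

theorem rulerBranch_isBramble : IsBramble rulerGraph rulerBranch where
  preconnected := rulerBranch_preconnected
  touches i j := by
    rcases lt_trichotomy i j with hij | rfl | hij
    · exact rulerBranch_touches_of_lt hij
    · have hi : .inl i ∈ rulerBranch i := inl_mem_rulerBranch.2 rfl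
      exact ⟨_, hi, _, hi, .inl rfl⟩
    · exact (rulerBranch_touches_of_lt hij).symm

theorem succ_lt_of_mem_rulerBranch {q : ℕ} (hij : i < j) (hp : .inr p ∈ rulerBranch i)
    (hq : .inr q ∈ rulerBranch j) : p + 1 < q := by
  have hpow : 2 ^ (i + 2) ≤ 2 ^ (j + 1) := Nat.pow_le_pow_right (by norm_num) (by omega)
  rw [inr_mem_rulerBranch] at hp hq
  omega

theorem rulerBranch_ne_and_not_adj (hij : i ≠ j) {u v : ℕ ⊕ ℕ} (hu : u ∈ rulerBranch i)
    (hv : v ∈ rulerBranch j) (huv : u.isLeft = v.isLeft) : u ≠ v ∧ ¬ rulerGraph.Adj u v := by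
  rcases u with a | p <;> rcases v with b | q
  · rw [inl_mem_rulerBranch] at hu hv
    subst hu hv
    exact ⟨Sum.inl_injective.ne hij, rulerGraph_not_adj_inl_inl⟩
  · simp at huv
  · simp at huv
  · rw [rulerGraph_adj_inr_inr, ne_eq, Sum.inr.injEq]
    rcases hij.lt_or_gt with h | h
    · have := succ_lt_of_mem_rulerBranch h hu hv
      omega
    · have := succ_lt_of_mem_rulerBranch h hv hu
      omega

end RulerBranch

section FiniteRulerGraph

variable (k : ℕ)

/-- The embedding of the finite ruler with `k` hubs and path `0, …, 2 ^ (k + 1) - 1`. -/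
def finiteRulerEmbedding : Fin k ⊕ Fin (2 ^ (k + 1)) ↪ ℕ ⊕ ℕ :=
  Fin.valEmbedding.sumMap Fin.valEmbedding

/-- The subgraph of the infinite ruler induced by the first `k` hubs and the first `2 ^ (k + 1)`
path vertices, which contains the first `k` branch sets. -/
def finiteRulerGraph : SimpleGraph (Fin k ⊕ Fin (2 ^ (k + 1))) :=
  rulerGraph.comap (finiteRulerEmbedding k)

theorem finiteRulerGraph_indFree :
    IndFree (completeBipartiteGraph (Fin 2) (Fin 2)) (finiteRulerGraph k) :=
  rulerGraph_indFree.of_embedding (Embedding.comap _ _)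

theorem finiteRulerGraph_okFree_two : OkFree (finiteRulerGraph k) 2 :=
  rulerGraph_okFree_two.of_embedding (Embedding.comap _ _)

theorem rulerBranch_subset_range {i : ℕ} (hi : i < k) :
    rulerBranch i ⊆ Set.range (finiteRulerEmbedding k) := by
  rintro (j | p) hv
  · exact ⟨.inl ⟨j, by rwa [inl_mem_rulerBranch.1 hv]⟩, rfl⟩
  · have hpow : 2 ^ (i + 2) ≤ 2 ^ (k + 1) := Nat.pow_le_pow_right (by norm_num) (by omega)
    have hp := (inr_mem_rulerBranch.1 hv).2
    exact ⟨.inr ⟨p, by omega⟩, rfl⟩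

theorem le_treeIndepNum_finiteRulerGraph_mul_two :
    k ≤ treeIndepNum (finiteRulerGraph k) * 2 := by
  have hB := (rulerBranch_isBramble.comp ((↑) : Fin k → ℕ)).preimage
    (Embedding.comap (finiteRulerEmbedding k) rulerGraph)
    fun i => rulerBranch_subset_range k i.isLt
  simpa [finiteRulerGraph] using hB.card_le_treeIndepNum_mul_card
    (fun u => (finiteRulerEmbedding k u).isLeft) fun i j hij u hu v hv huv =>
      (rulerBranch_ne_and_not_adj (Fin.val_ne_of_ne hij) hu hv huv).imp
        (ne_of_apply_ne (finiteRulerEmbedding k)) id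

theorem logb_two_card_finiteRulerGraph_le :
    Real.logb 2 (Nat.card (Fin k ⊕ Fin (2 ^ (k + 1)))) ≤ k + 2 := by
  have hcard : k + 2 ^ (k + 1) ≤ 2 ^ (k + 2) := by
    have := k.lt_two_pow_self
    rw [pow_succ, pow_add]
    omega
  have hcast : ((k + 2 ^ (k + 1) : ℕ) : ℝ) ≤ 2 ^ ((k + 2 : ℕ) : ℝ) := by
    rw [Real.rpow_natCast]
    exact_mod_cast hcard
  rw [Nat.card_sum, Nat.card_fin, Nat.card_fin,
    Real.logb_le_iff_le_rpow one_lt_two (by positivity)]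
  exact_mod_cast hcast

end FiniteRulerGraph

/-- For every positive integer `n` there exists a `K_{2,2}`-free
`𝒪_2`-free graph `G` with at least `n` vertices whose tree-independence number satisfies
`tree-α(G) ≥ (log₂ |V(G)| − 1) / 2`. -/
theorem stmt_12 (n : ℕ) (hn : 0 < n) :
    ∃ (V : Type) (_ : Finite V) (G : SimpleGraph V),
      n ≤ Nat.card V ∧
      IndFree (completeBipartiteGraph (Fin 2) (Fin 2)) G ∧
      OkFree G 2 ∧
      (Real.logb 2 (Nat.card V) - 1) / 2 ≤ (treeIndepNum G : ℝ) := by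
  have hcard : n ≤ Nat.card (Fin (2 * n + 1) ⊕ Fin (2 ^ (2 * n + 2))) := by
    rw [Nat.card_sum, Nat.card_fin]
    omega
  refine ⟨_, inferInstance, finiteRulerGraph (2 * n + 1), hcard,
    finiteRulerGraph_indFree _, finiteRulerGraph_okFree_two _, ?_⟩
  have htree : n + 1 ≤ treeIndepNum (finiteRulerGraph (2 * n + 1)) := by
    have := le_treeIndepNum_finiteRulerGraph_mul_two (2 * n + 1)
    omega
  have hlog := logb_two_card_finiteRulerGraph_le (2 * n + 1)
  have htree' : (n + 1 : ℝ) ≤ treeIndepNum (finiteRulerGraph (2 * n + 1)) := mod_cast htree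
  push_cast at hlog
  linarith
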